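/- arXiv:2009.09113 — 2 statements merged into one kernel-verified Lean document; each statement's English description precedes it below -/
import Mathlib

section
/- Every locally finite Borel graph 𝒢 has a maximal independent set A ⊆ V which is Borel. -/
universe u

open Set TopologicalSpace MeasureTheory

/-- A countable family of sets is Borel separable. -/
def FamSep {X : Type*} [MeasurableSpace X] (A : ℕ → Set X) : Prop :=
  ∃ B : ℕ → Set X, (∀ n, MeasurableSet (B n)) ∧ (∀ n, A n ⊆ B n) ∧ ⋂ n, B n = ∅

theorem FamSep.mono {X : Type*} [MeasurableSpace X] {A A' : ℕ → Set X}
    (h : FamSep A') (hA : ∀ n, A n ⊆ A' n) : FamSep A := by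
  obtain ⟨B, h1, h2, h3⟩ := h
  exact ⟨B, h1, fun n => (hA n).trans (h2 n), h3⟩

theorem FamSep.split {X : Type*} [MeasurableSpace X] {A : ℕ → Set X} (p : ℕ)
    (C : ℕ → ℕ → Set X) (hp : A p ⊆ ⋃ j, C j p) (hq : ∀ j n, n ≠ p → A n ⊆ C j n)
    (h : ∀ j, FamSep (C j)) : FamSep A := by
  choose B h1 h2 h3 using h
  refine ⟨fun n => if n = p then ⋃ j, B j n else ⋂ j, B j n, ?_, ?_, ?_⟩
  · intro n
    dsimp only
    split_ifs
    · exact MeasurableSet.iUnion fun j => h1 j n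
    · exact MeasurableSet.iInter fun j => h1 j n
  · intro n
    dsimp only
    split_ifs with hn
    · subst hn
      exact hp.trans (iUnion_mono fun j => h2 j n)
    · exact subset_iInter fun j => (hq j n hn).trans (h2 j n)
  · rw [eq_empty_iff_forall_notMem]
    intro x hx
    rw [mem_iInter] at hx
    have hxp := hx p
    simp only [if_true, mem_iUnion] at hxp
    obtain ⟨j, hj⟩ := hxp
    have : x ∈ ⋂ n, B j n := by
      rw [mem_iInter]
      intro n
      by_cases hn : n = p
      · rw [hn]; exact hj
      · have := hx n
        simp only [if_neg hn, mem_iInter] at this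
        exact this j
    rw [h3 j] at this
    exact this

/-- pieces of the analytic sets -/
def famPiece {X : Type*} (f : ℕ → (ℕ → ℕ) → X) (z : ℕ → ℕ) (m : ℕ) (n : ℕ) : Set X :=
  f n '' {x | ∀ k, Nat.pair n k < m → x k = z (Nat.pair n k)}

theorem famPiece_step {X : Type*} [MeasurableSpace X] (f : ℕ → (ℕ → ℕ) → X) (z : ℕ → ℕ) (m : ℕ)
    (h : ∀ j, FamSep (famPiece f (Function.update z m j) (m + 1))) : FamSep (famPiece f z m) := by
  refine FamSep.split (Nat.unpair m).1 _ ?_ ?_ h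
  · rintro _ ⟨x, hx, rfl⟩
    refine mem_iUnion.2 ⟨x (Nat.unpair m).2, x, ?_, rfl⟩
    intro k hk
    by_cases hkm : Nat.pair (Nat.unpair m).1 k = m
    · have : k = (Nat.unpair m).2 := by
        conv_rhs => rw [← hkm]
        simp
      rw [hkm, Function.update_self, this]
    · rw [Function.update_of_ne hkm]
      exact hx k (by omega)
  · rintro j n hn _ ⟨x, hx, rfl⟩
    refine ⟨x, ?_, rfl⟩
    intro k hk
    have hkm : Nat.pair n k ≠ m := by
      rintro rfl
      simp at hn
    rw [Function.update_of_ne hkm]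
    exact hx k (by omega)

/-- Novikov's separation theorem. -/
theorem famSep_of_analytic {X : Type*} [MeasurableSpace X] [TopologicalSpace X] [T2Space X]
    [OpensMeasurableSpace X] (A : ℕ → Set X) (hA : ∀ n, AnalyticSet (A n))
    (hi : ⋂ n, A n = ∅) : FamSep A := by
  by_cases he : ∃ n, A n = ∅
  · obtain ⟨p, hp⟩ := he
    refine ⟨fun n => if n = p then ∅ else univ, ?_, ?_, ?_⟩
    · intro n; dsimp only; split_ifs <;> simp
    · intro n; dsimp only; split_ifs with hn
      · rw [hn, hp]
      · simp
    · rw [eq_empty_iff_forall_notMem]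
      intro x hx
      have := mem_iInter.1 hx p
      simp at this
  have hA' : ∀ n, ∃ f : (ℕ → ℕ) → X, Continuous f ∧ range f = A n := by
    intro n
    have := hA n
    rw [AnalyticSet] at this
    exact this.resolve_left fun h => he ⟨n, h⟩
  choose f hf hfA using hA'
  by_contra hcon
  have key : ∀ (z : ℕ → ℕ) (m : ℕ), ∃ j, ¬ FamSep (famPiece f z m) →
      ¬ FamSep (famPiece f (Function.update z m j) (m + 1)) := by
    intro z m
    by_cases h : FamSep (famPiece f z m)
    · exact ⟨0, fun h' => absurd h h'⟩
    · by_contra! hc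
      exact h (famPiece_step f z m fun j => (hc j).2)
  choose J hJ using key
  let s : ℕ → ℕ → ℕ := fun m => Nat.rec (fun _ => 0) (fun m z => Function.update z m (J z m)) m
  have hs : ∀ m, s (m + 1) = Function.update (s m) m (J (s m) m) := fun m => rfl
  have hns : ∀ m, ¬ FamSep (famPiece f (s m) m) := by
    intro m
    induction m with
    | zero =>
      intro h
      refine hcon (h.mono fun n => ?_)
      rw [← hfA n]
      rintro _ ⟨x, rfl⟩
      exact ⟨x, by simp, rfl⟩
    | succ m ih => rw [hs]; exact hJ _ _ ih
  let z : ℕ → ℕ := fun i => s (i + 1) i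
  have hz : ∀ m i, i < m → s m i = z i := by
    intro m i him
    induction m, him using Nat.le_induction with
    | base => rfl
    | succ m hm ih =>
      rw [hs, Function.update_of_ne (by omega)]
      exact ih
  have hnz : ∀ m, ¬ FamSep (famPiece f z m) := by
    intro m h
    refine hns m (h.mono fun n => ?_)
    rintro _ ⟨x, hx, rfl⟩
    exact ⟨x, fun k hk => (hx k hk).trans (hz _ _ hk), rfl⟩
  let w : ℕ → ℕ → ℕ := fun n k => z (Nat.pair n k)
  have small : ∀ (n : ℕ) (U : Set X), IsOpen U → f n (w n) ∈ U →
      ∃ M, ∀ m ≥ M, famPiece f z m n ⊆ U := by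
    intro n U hU hw
    obtain ⟨I, u, hu, hIu⟩ := isOpen_pi_iff.1 (hU.preimage (hf n)) (w n) hw
    refine ⟨I.sup (fun k => Nat.pair n k + 1), fun m hm => ?_⟩
    rintro _ ⟨x, hx, rfl⟩
    refine hIu (fun k hk => ?_)
    have h1 : Nat.pair n k + 1 ≤ m :=
      (Finset.le_sup (f := fun k => Nat.pair n k + 1) hk).trans hm
    rw [hx k (by omega)]
    exact (hu k hk).2
  by_cases heq : ∀ n, f n (w n) = f 0 (w 0)
  · have : f 0 (w 0) ∈ ⋂ n, A n := by
      rw [mem_iInter]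
      intro n
      rw [← heq n, ← hfA n]
      exact mem_range_self _
    rw [hi] at this
    exact this
  · push Not at heq
    obtain ⟨n, hn⟩ := heq
    obtain ⟨U, W, hU, hW, hxU, hxW, hd⟩ := t2_separation hn
    obtain ⟨M, hM⟩ := small n U hU hxU
    obtain ⟨N, hN⟩ := small 0 W hW hxW
    have hn0 : n ≠ 0 := by rintro rfl; exact hn rfl
    refine hnz (max M N) ⟨fun k => if k = n then U else if k = 0 then W else univ, ?_, ?_, ?_⟩
    · intro k; dsimp only; split_ifs
      · exact hU.measurableSet
      · exact hW.measurableSet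
      · exact MeasurableSet.univ
    · intro k; dsimp only; split_ifs with h1 h2
      · rw [h1]; exact hM _ (le_max_left _ _)
      · rw [h2]; exact hN _ (le_max_right _ _)
      · exact subset_univ _
    · rw [eq_empty_iff_forall_notMem]
      intro x hx
      rw [mem_iInter] at hx
      have h1 := hx n
      have h2 := hx 0
      simp only [if_true, if_neg hn0.symm] at h1 h2
      exact disjoint_left.1 hd h1 h2

/-- Projection of a Borel set with sections of bounded size. -/
theorem measurableSet_fst_bdd {Y : Type u} [MeasurableSpace Y] [StandardBorelSpace Y] (n : ℕ) :
    ∀ {X : Type u} [MeasurableSpace X] [StandardBorelSpace X] (P : Set (X × Y)),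
    MeasurableSet P → (∀ x, {y | (x, y) ∈ P}.Finite) →
    (∀ x, {y | (x, y) ∈ P}.ncard ≤ n) → MeasurableSet (Prod.fst '' P) := by
  induction n with
  | zero =>
    intro X _ _ P hP hfin hn
    have : P = ∅ := by
      rw [eq_empty_iff_forall_notMem]
      rintro ⟨x, y⟩ h
      have h0 := (ncard_eq_zero (hfin x)).1 (Nat.le_zero.1 (hn x))
      have : y ∈ {y | (x, y) ∈ P} := h
      rw [h0] at this
      exact this
    rw [this, image_empty]
    exact MeasurableSet.empty
  | succ n ih =>
    intro X _ _ P hP hfin hn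
    let e : Y → ℝ := embeddingReal Y
    have he : MeasurableEmbedding e := measurableEmbedding_embeddingReal Y
    let Q : Set ((X × Y) × Y) := {q | q.1 ∈ P ∧ (q.1.1, q.2) ∈ P ∧ e q.2 < e q.1.2}
    have hQ : MeasurableSet Q := by
      refine (measurable_fst hP).inter (MeasurableSet.inter ?_ ?_)
      · exact ((measurable_fst.comp measurable_fst).prodMk measurable_snd) hP
      · exact measurableSet_lt (he.measurable.comp measurable_snd)
          (he.measurable.comp (measurable_snd.comp measurable_fst))
    have hQs : ∀ a : X × Y, {y | (a, y) ∈ Q} ⊆ {y | (a.1, y) ∈ P} := fun a y hy => hy.2.1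
    have hR : MeasurableSet (Prod.fst '' Q) := by
      refine ih Q hQ (fun a => (hfin a.1).subset (hQs a)) fun a => ?_
      by_cases ha : a ∈ P
      · have hlt : {y | (a, y) ∈ Q}.ncard < {y | (a.1, y) ∈ P}.ncard := by
          refine ncard_lt_ncard ((ssubset_iff_of_subset (hQs a)).2 ⟨a.2, ha, ?_⟩) (hfin a.1)
          intro h
          exact lt_irrefl _ h.2.2
        have := hn a.1
        omega
      · have : {y | (a, y) ∈ Q} = ∅ := by
          rw [eq_empty_iff_forall_notMem]
          intro y hy
          exact ha hy.1
        rw [this]; simp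
    have heq : Prod.fst '' P = Prod.fst '' (P \ Prod.fst '' Q) := by
      apply Subset.antisymm
      · rintro _ ⟨⟨x, y⟩, hxy, rfl⟩
        obtain ⟨y0, hy0, hmin⟩ := exists_min_image _ e (hfin x) ⟨y, hxy⟩
        refine ⟨(x, y0), ⟨hy0, ?_⟩, rfl⟩
        rintro ⟨⟨a, y1⟩, h, rfl⟩
        exact absurd h.2.2 (not_lt.2 (hmin y1 h.2.1))
      · exact image_mono sdiff_subset
    rw [heq]
    refine (hP.diff hR).image_of_measurable_injOn measurable_fst ?_
    rintro ⟨x, y⟩ h ⟨x', y'⟩ h' hxx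
    obtain rfl : x = x' := hxx
    have h1 : ¬ e y' < e y := fun hlt => h.2 ⟨((x, y), y'), ⟨h.1, h'.1, hlt⟩, rfl⟩
    have h2 : ¬ e y < e y' := fun hlt => h'.2 ⟨((x, y'), y), ⟨h'.1, h.1, hlt⟩, rfl⟩
    rw [he.injective (le_antisymm (not_lt.1 h1) (not_lt.1 h2))]

theorem measurableSet_fst_finite {X : Type*} [MeasurableSpace X] [StandardBorelSpace X]
    (P : Set (X × X)) (hP : MeasurableSet P) (hfin : ∀ x, {y | (x, y) ∈ P}.Finite) :
    MeasurableSet (Prod.fst '' P) := by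
  letI := upgradeStandardBorel X
  let T : (n : ℕ) → Set (X × (Fin n → X)) := fun n =>
    {q | (∀ i, (q.1, q.2 i) ∈ P) ∧ ∀ i j, i ≠ j → q.2 i ≠ q.2 j}
  have hT : ∀ n, MeasurableSet (T n) := by
    intro n
    have h1 : MeasurableSet {q : X × (Fin n → X) | ∀ i, (q.1, q.2 i) ∈ P} := by
      rw [ofPred_forall]
      exact MeasurableSet.iInter fun i =>
        (measurable_fst.prodMk ((measurable_pi_apply i).comp measurable_snd)) hP
    have h2 : MeasurableSet {q : X × (Fin n → X) | ∀ i j, i ≠ j → q.2 i ≠ q.2 j} := by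
      simp only [ofPred_forall]
      refine MeasurableSet.iInter fun i => MeasurableSet.iInter fun j =>
        MeasurableSet.iInter fun _ => ?_
      exact (measurableSet_eq_fun ((measurable_pi_apply i).comp measurable_snd)
        ((measurable_pi_apply j).comp measurable_snd)).compl
    exact h1.inter h2
  obtain ⟨B, hB, hTB, hBe⟩ := famSep_of_analytic (fun n => Prod.fst '' T n)
    (fun n => (hT n).analyticSet_image measurable_fst) (by
      rw [eq_empty_iff_forall_notMem]
      intro x hx
      rw [mem_iInter] at hx
      obtain ⟨⟨a, q⟩, ⟨h1, h2⟩, hax⟩ := hx ({y | (x, y) ∈ P}.ncard + 1)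
      have hinj : Function.Injective q := fun i j hij => by
        by_contra hne
        exact h2 i j hne hij
      have hr : range q ⊆ {y | (x, y) ∈ P} := by
        rintro _ ⟨i, rfl⟩
        rw [← hax]
        exact h1 i
      have := ncard_le_ncard hr (hfin x)
      rw [← image_univ, ncard_image_of_injective _ hinj, ncard_univ, Nat.card_fin] at this
      simp at this)
  have heq : Prod.fst '' P = ⋃ n, Prod.fst '' (P ∩ Prod.fst ⁻¹' (B n)ᶜ) := by
    rw [← image_iUnion, ← inter_iUnion, ← preimage_iUnion, ← compl_iInter, hBe]
    simp
  rw [heq]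
  refine MeasurableSet.iUnion fun n => ?_
  have hsub : ∀ x, {y | (x, y) ∈ P ∩ Prod.fst ⁻¹' (B n)ᶜ} ⊆ {y | (x, y) ∈ P} :=
    fun x y hy => hy.1
  refine measurableSet_fst_bdd n _ (hP.inter (measurable_fst (hB n).compl))
    (fun x => (hfin x).subset (hsub x)) fun x => ?_
  by_contra! hlt
  obtain ⟨t, ht, htc⟩ := exists_subset_card_eq hlt.le
  have htf : t.Finite := (hfin x).subset (ht.trans (hsub x))
  have hne : {y | (x, y) ∈ P ∩ Prod.fst ⁻¹' (B n)ᶜ}.Nonempty :=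
    nonempty_of_ncard_ne_zero (by omega)
  obtain ⟨y, hy⟩ := hne
  apply hy.2
  apply hTB n
  haveI := htf.fintype
  have hc : Fintype.card t = n := by
    rw [← htc, ← Nat.card_coe_set_eq, Nat.card_eq_fintype_card]
  let g := (Fintype.equivFinOfCardEq hc).symm
  refine ⟨(x, fun i => (g i : X)), ⟨fun i => (ht (g i).2).1, fun i j hij h => hij ?_⟩, rfl⟩
  exact g.injective (Subtype.ext h)

/-- Every locally finite Borel graph has a maximal independent set which is Borel. -/
theorem stmt_10 {V : Type*} [MeasurableSpace V] [StandardBorelSpace V]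
    (G : SimpleGraph V) (hlf : ∀ x : V, (G.neighborSet x).Finite)
    (hE : MeasurableSet {p : V × V | G.Adj p.1 p.2}) :
    ∃ A : Set V, MeasurableSet A ∧ (∀ x ∈ A, ∀ y ∈ A, ¬ G.Adj x y) ∧
      ∀ x : V, x ∉ A → ∃ y ∈ A, G.Adj x y := by
  letI := upgradeStandardBorel V
  let N : Set V → Set V := fun S => {x | ∃ y ∈ S, G.Adj x y}
  have hN : ∀ S, MeasurableSet S → MeasurableSet (N S) := by
    intro S hS
    have : N S = Prod.fst '' ({p : V × V | G.Adj p.1 p.2} ∩ Prod.snd ⁻¹' S) := by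
      ext x
      constructor
      · rintro ⟨y, hy, h⟩
        exact ⟨(x, y), ⟨h, hy⟩, rfl⟩
      · rintro ⟨⟨a, y⟩, ⟨h, hy⟩, rfl⟩
        exact ⟨y, hy, h⟩
    rw [this]
    exact measurableSet_fst_finite _ (hE.inter (measurable_snd hS))
      fun x => (hlf x).subset fun y hy => hy.1
  obtain ⟨b, hbc, -, hb⟩ := exists_countable_basis V
  obtain ⟨U, hU⟩ := (hbc.insert ∅).exists_eq_range (insert_nonempty _ _)
  have hUm : ∀ n, MeasurableSet (U n) := by
    intro n
    have : U n ∈ insert ∅ b := hU ▸ mem_range_self n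
    rcases this with h | h
    · rw [h]; exact MeasurableSet.empty
    · exact (hb.isOpen h).measurableSet
  let W : ℕ → Set V := fun n => U n \ N (U n)
  have hW : ∀ n, MeasurableSet (W n) := fun n => (hUm n).diff (hN _ (hUm n))
  have hcov : ∀ x, ∃ n, x ∈ W n := by
    intro x
    obtain ⟨u, hub, hxu, hu⟩ := hb.exists_subset_of_mem_open
      (show x ∈ (G.neighborSet x)ᶜ from fun h => G.loopless.irrefl x h) (hlf x).isClosed.isOpen_compl
    have : u ∈ range U := hU ▸ mem_insert_of_mem _ hub
    obtain ⟨n, rfl⟩ := this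
    exact ⟨n, hxu, fun ⟨y, hy, h⟩ => hu hy h⟩
  let B : ℕ → Set V := fun n => Nat.rec ∅ (fun n S => S ∪ (W n \ N S)) n
  have hBs : ∀ n, B (n + 1) = B n ∪ (W n \ N (B n)) := fun n => rfl
  have hBm : ∀ n, MeasurableSet (B n) := by
    intro n
    induction n with
    | zero => exact MeasurableSet.empty
    | succ n ih => rw [hBs]; exact ih.union ((hW n).diff (hN _ ih))
  have hmono : Monotone B := monotone_nat_of_le_succ fun n => by
    rw [hBs]; exact subset_union_left
  have hind : ∀ n, ∀ x ∈ B n, ∀ y ∈ B n, ¬ G.Adj x y := by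
    intro n
    induction n with
    | zero => intro x hx; exact absurd hx (notMem_empty x)
    | succ n ih =>
      rw [hBs]
      rintro x (hx | hx) y (hy | hy) h
      · exact ih x hx y hy h
      · exact hy.2 ⟨x, hx, h.symm⟩
      · exact hx.2 ⟨y, hy, h⟩
      · exact hx.1.2 ⟨y, hy.1.1, h⟩
  refine ⟨⋃ n, B n, MeasurableSet.iUnion hBm, ?_, ?_⟩
  · intro x hx y hy
    obtain ⟨n, hn⟩ := mem_iUnion.1 hx
    obtain ⟨m, hm⟩ := mem_iUnion.1 hy
    exact hind (max n m) x (hmono (le_max_left _ _) hn) y (hmono (le_max_right _ _) hm)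
  · intro x hx
    obtain ⟨n, hn⟩ := hcov x
    have : x ∈ N (B n) := by
      by_contra hc
      exact hx (mem_iUnion.2 ⟨n + 1, Or.inr ⟨hn, hc⟩⟩)
    obtain ⟨y, hy, h⟩ := this
    exact ⟨y, mem_iUnion.2 ⟨n, hy⟩, h⟩
end

section
/- Every locally finite Borel graph 𝒢 = (V, E, 𝓑) has a maximal matching M ⊆ E which is a Borel subset of V². -/
open Set TopologicalSpace MeasureTheory

/-- A sequence of sets is separable if it has Borel supersets with empty intersection. -/
def NovSep {α : Type*} [MeasurableSpace α] (A : ℕ → Set α) : Prop :=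
  ∃ D : ℕ → Set α, (∀ n, MeasurableSet (D n)) ∧ (∀ n, A n ⊆ D n) ∧ ∀ x, ∃ n, x ∉ D n

/-- The set of branches of the `k`-th tree compatible with the first `n` entries of `x`. -/
def novCyl (k : ℕ) (x : ℕ → ℕ) (n : ℕ) : Set (ℕ → ℕ) :=
  {w | ∀ i, Nat.pair k i < n → w i = x (Nat.pair k i)}

lemma novSep_step {α : Type*} [MeasurableSpace α] (A : ℕ → Set α) (B : ℕ → ℕ → Set α) (k : ℕ)
    (hk : A k ⊆ ⋃ m, B m k) (hne : ∀ j, j ≠ k → ∀ m, A j ⊆ B m j)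
    (h : ∀ m, NovSep (B m)) : NovSep A := by
  classical
  choose D hD1 hD2 hD3 using h
  refine ⟨fun j => if j = k then ⋃ m, D m k else ⋂ m, D m j, ?_, ?_, ?_⟩
  · intro j
    dsimp only
    split_ifs
    · exact MeasurableSet.iUnion fun m => hD1 m k
    · exact MeasurableSet.iInter fun m => hD1 m j
  · intro j
    dsimp only
    split_ifs with hj
    · subst hj
      exact hk.trans (iUnion_mono fun m => hD2 m _)
    · exact subset_iInter fun m => (hne j hj m).trans (hD2 m j)
  · intro x
    by_contra hcon
    push Not at hcon
    have h1 := hcon k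
    simp only [if_true, mem_iUnion] at h1
    obtain ⟨m, hm⟩ := h1
    obtain ⟨n, hn⟩ := hD3 m x
    by_cases hnk : n = k
    · subst hnk; exact hn hm
    · have h2 := hcon n
      simp only [if_neg hnk, mem_iInter] at h2
      exact hn (h2 m)

/-- Novikov's separation theorem, for continuous images of Baire space. -/
lemma novSep_range {α : Type*} [TopologicalSpace α] [T2Space α] [MeasurableSpace α]
    [OpensMeasurableSpace α] (f : ℕ → (ℕ → ℕ) → α) (hf : ∀ k, Continuous (f k))
    (he : ∀ x, ∃ n, x ∉ range (f n)) : NovSep (fun k => range (f k)) := by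
  classical
  by_contra hns
  let P : ℕ → (ℕ → ℕ) → Prop := fun n x => ¬ NovSep (fun k => f k '' novCyl k x n)
  have step : ∀ n x, P n x → ∃ m, P (n+1) (Function.update x n m) := by
    intro n x hP
    by_contra hcon
    push Not at hcon
    apply hP
    refine novSep_step _ (fun m k => f k '' novCyl k (Function.update x n m) (n+1))
      (Nat.unpair n).1 ?_ ?_ (fun m => not_not.1 (hcon m))
    · rintro _ ⟨w, hw, rfl⟩
      refine mem_iUnion.2 ⟨w (Nat.unpair n).2, w, ?_, rfl⟩
      intro i hi
      by_cases h : Nat.pair (Nat.unpair n).1 i = n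
      · have : (Nat.unpair n).2 = i := by
          conv_lhs => rw [← h]
          simp
        rw [h, Function.update_self, this]
      · rw [Function.update_of_ne h]
        exact hw i (by omega)
    · rintro j hj m _ ⟨w, hw, rfl⟩
      refine ⟨w, ?_, rfl⟩
      intro i hi
      have h : Nat.pair j i ≠ n := by
        rintro rfl
        simp at hj
      rw [Function.update_of_ne h]
      exact hw i (by omega)
  have h0 : P 0 (fun _ => 0) := by
    intro h
    apply hns
    have : (fun k => f k '' novCyl k (fun _ => 0) 0) = fun k => range (f k) := by
      funext k
      have : novCyl k (fun _ => 0) 0 = univ := by ext; simp [novCyl]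
      rw [this, image_univ]
    rwa [this] at h
  choose! m hm using step
  let S : ℕ → ℕ → ℕ := fun n => Nat.rec (fun _ => 0) (fun n x => Function.update x n (m n x)) n
  have hSs : ∀ n, S (n+1) = Function.update (S n) n (m n (S n)) := fun n => rfl
  have hS : ∀ n, P n (S n) := by
    intro n
    induction n with
    | zero => exact h0
    | succ n ih => rw [hSs]; exact hm n _ ih
  let z : ℕ → ℕ := fun t => S (t+1) t
  have hz : ∀ n t, t < n → S n t = z t := by
    intro n
    induction n with
    | zero => intro t ht; omega
    | succ n ih =>
      intro t ht
      rcases Nat.lt_succ_iff_lt_or_eq.1 ht with h | h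
      · rw [hSs, Function.update_of_ne h.ne, ih t h]
      · subst h; rfl
  have hPz : ∀ n, ¬ NovSep (fun k => f k '' novCyl k z n) := by
    intro n h
    apply hS n
    have : ∀ k, novCyl k (S n) n = novCyl k z n := by
      intro k
      ext w
      refine forall_congr' fun i => forall_congr' fun hi => ?_
      rw [hz n _ hi]
    simpa only [this] using h
  let w : ℕ → ℕ → ℕ := fun k i => z (Nat.pair k i)
  have key : ∀ k (U : Set α), IsOpen U → f k (w k) ∈ U →
      ∃ N, ∀ n, N ≤ n → f k '' novCyl k z n ⊆ U := by
    intro k U hU hk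
    have ho : IsOpen (f k ⁻¹' U) := hU.preimage (hf k)
    obtain ⟨N, hN⟩ := (PiNat.isTopologicalBasis_cylinders (E := fun _ => ℕ)).exists_subset_of_mem_open
      (show w k ∈ f k ⁻¹' U from hk) ho
    obtain ⟨⟨y, M, rfl⟩, h1, h2⟩ := hN
    refine ⟨Nat.pair k M, fun n hn => ?_⟩
    rintro _ ⟨v, hv, rfl⟩
    apply h2
    intro i hi
    rw [hv i ((Nat.pair_lt_pair_right k hi).trans_le hn)]
    exact h1 i hi
  obtain ⟨n, hn⟩ := he (f 0 (w 0))
  have hne : f 0 (w 0) ≠ f n (w n) := fun h => hn (h ▸ mem_range_self _)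
  obtain ⟨U, W, hU, hW, h0U, hnW, hd⟩ := t2_separation hne
  obtain ⟨N1, hN1⟩ := key 0 U hU h0U
  obtain ⟨N2, hN2⟩ := key n W hW hnW
  have hn0 : n ≠ 0 := by rintro rfl; exact hne rfl
  apply hPz (max N1 N2)
  refine ⟨fun k => if k = 0 then U else if k = n then W else univ, ?_, ?_, ?_⟩
  · intro k
    dsimp only
    split_ifs
    exacts [hU.measurableSet, hW.measurableSet, MeasurableSet.univ]
  · intro k
    dsimp only
    split_ifs with h1 h2
    · subst h1; exact hN1 _ (le_max_left _ _)
    · subst h2; exact hN2 _ (le_max_right _ _)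
    · exact subset_univ _
  · intro x
    by_cases hx : x ∈ U
    · refine ⟨n, ?_⟩
      simp only [if_neg hn0, if_true]
      exact fun h => Set.disjoint_left.1 hd hx h
    · exact ⟨0, by simpa using hx⟩

/-- Novikov's separation theorem. -/
lemma novSep_analytic {α : Type*} [TopologicalSpace α] [T2Space α] [MeasurableSpace α]
    [OpensMeasurableSpace α] (A : ℕ → Set α) (hA : ∀ k, AnalyticSet (A k))
    (he : ∀ x, ∃ n, x ∉ A n) : NovSep A := by
  classical
  by_cases h : ∃ k, A k = ∅
  · obtain ⟨k, hk⟩ := h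
    refine ⟨fun j => if j = k then ∅ else univ, ?_, ?_, fun x => ⟨k, by simp⟩⟩
    · intro j
      dsimp only
      split_ifs <;> simp
    · intro j
      dsimp only
      split_ifs with hj
      · subst hj; exact hk.subset
      · exact subset_univ _
  · push Not at h
    have : ∀ k, ∃ f : (ℕ → ℕ) → α, Continuous f ∧ range f = A k := by
      intro k
      have := hA k
      rw [AnalyticSet] at this
      exact this.resolve_left (h k).ne_empty
    choose f hf hr using this
    have hAe : A = fun k => range (f k) := funext fun k => (hr k).symm
    rw [hAe] at he ⊢
    exact novSep_range f hf he

/-- Symmetric matchings (as sets of ordered pairs). -/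
def IsMat {V : Type*} (G : SimpleGraph V) (M : Set (V × V)) : Prop :=
  M ⊆ {p : V × V | G.Adj p.1 p.2} ∧ (∀ p ∈ M, (p.2, p.1) ∈ M) ∧
    (∀ x y z : V, (x, y) ∈ M → (x, z) ∈ M → y = z)

/-- Countable Borel cover of the edges by matchings. -/
lemma exists_cover {V : Type*} [MeasurableSpace V] [StandardBorelSpace V]
    (G : SimpleGraph V) (hlf : ∀ x : V, (G.neighborSet x).Finite)
    (hE : MeasurableSet {p : V × V | G.Adj p.1 p.2}) :
    ∃ B : ℕ → Set (V × V), (∀ n, MeasurableSet (B n)) ∧ (∀ n, IsMat G (B n)) ∧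
      ∀ x y, G.Adj x y → ∃ n, (x, y) ∈ B n := by
  letI := upgradeStandardBorel V
  let b := countableBasis V
  let I : Set (Set V × Set V) :=
    insert (∅, ∅) {p | p ∈ b ×ˢ b ∧ Disjoint p.1 p.2}
  have hIc : I.Countable :=
    ((((countable_countableBasis V).prod (countable_countableBasis V))).mono
      (fun p hp => hp.1)).insert _
  obtain ⟨e, he⟩ := hIc.exists_eq_range ⟨_, mem_insert _ _⟩
  have heI : ∀ n, e n ∈ I := fun n => he ▸ mem_range_self n
  have hd : ∀ n, Disjoint (e n).1 (e n).2 := by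
    intro n
    rcases heI n with h | h
    · rw [h]; simp
    · exact h.2
  have hm : ∀ n, MeasurableSet (e n).1 ∧ MeasurableSet (e n).2 := by
    intro n
    rcases heI n with h | h
    · rw [h]; simp
    · exact ⟨(isOpen_of_mem_countableBasis h.1.1).measurableSet,
        (isOpen_of_mem_countableBasis h.1.2).measurableSet⟩
  let E : Set (V × V) := {p | G.Adj p.1 p.2}
  let A1 : ℕ → Set (V × V) := fun n => E \ ((e n).1 ×ˢ (e n).2)
  let T2 : ℕ → Set ((V × V) × V) := fun n =>
    {q | q.1 ∈ E ∧ (q.1.1, q.2) ∈ E ∧ q.2 ≠ q.1.2 ∧ q.2 ∈ (e n).2}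
  let T3 : ℕ → Set ((V × V) × V) := fun n =>
    {q | q.1 ∈ E ∧ (q.1.2, q.2) ∈ E ∧ q.2 ≠ q.1.1 ∧ q.2 ∈ (e n).1}
  let A : ℕ → Set (V × V) := fun n => A1 n ∪ (Prod.fst '' T2 n ∪ Prod.fst '' T3 n)
  have hT2 : ∀ n, MeasurableSet (T2 n) := by
    intro n
    refine (measurable_fst hE).inter (MeasurableSet.inter ?_ (MeasurableSet.inter ?_ ?_))
    · exact (show Measurable fun q : (V × V) × V => (q.1.1, q.2) by fun_prop) hE
    · exact (measurableSet_eq_fun (by fun_prop) (by fun_prop)).compl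
    · exact measurable_snd (hm n).2
  have hT3 : ∀ n, MeasurableSet (T3 n) := by
    intro n
    refine (measurable_fst hE).inter (MeasurableSet.inter ?_ (MeasurableSet.inter ?_ ?_))
    · exact (show Measurable fun q : (V × V) × V => (q.1.2, q.2) by fun_prop) hE
    · exact (measurableSet_eq_fun (by fun_prop) (by fun_prop)).compl
    · exact measurable_snd (hm n).1
  have hA : ∀ n, AnalyticSet (A n) := by
    intro n
    have h1 : AnalyticSet (A1 n) := (hE.diff ((hm n).1.prod (hm n).2)).analyticSet
    have h2 : AnalyticSet (Prod.fst '' T2 n) := (hT2 n).analyticSet.image_of_continuous continuous_fst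
    have h3 : AnalyticSet (Prod.fst '' T3 n) := (hT3 n).analyticSet.image_of_continuous continuous_fst
    have hu : ∀ s t : Set (V × V), AnalyticSet s → AnalyticSet t → AnalyticSet (s ∪ t) := by
      intro s t hs ht
      rw [union_eq_iUnion]
      exact AnalyticSet.iUnion fun b => by cases b <;> assumption
    exact hu _ _ h1 (hu _ _ h2 h3)
  have hAe : ∀ p, ∃ n, p ∉ A n := by
    rintro ⟨x, y⟩
    by_cases hxy : G.Adj x y
    swap
    · refine ⟨0, ?_⟩
      rintro (h | ⟨q, hq, hq'⟩ | ⟨q, hq, hq'⟩)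
      · exact hxy h.1
      · have := hq.1; rw [hq'] at this; exact hxy this
      · have := hq.1; rw [hq'] at this; exact hxy this
    obtain ⟨U0, W0, hU0, hW0, hxU, hyW, hUW⟩ := t2_separation hxy.ne
    have hU1 : IsOpen (U0 \ (G.neighborSet y \ {x})) :=
      hU0.sdiff ((hlf y).subset sdiff_subset).isClosed
    have hW1 : IsOpen (W0 \ (G.neighborSet x \ {y})) :=
      hW0.sdiff ((hlf x).subset sdiff_subset).isClosed
    obtain ⟨U, hUb, hxU', hUs⟩ := (isBasis_countableBasis V).exists_subset_of_mem_open
      (show x ∈ U0 \ (G.neighborSet y \ {x}) from ⟨hxU, fun h => h.2 rfl⟩) hU1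
    obtain ⟨W, hWb, hyW', hWs⟩ := (isBasis_countableBasis V).exists_subset_of_mem_open
      (show y ∈ W0 \ (G.neighborSet x \ {y}) from ⟨hyW, fun h => h.2 rfl⟩) hW1
    have hmem : (U, W) ∈ I := Or.inr ⟨⟨hUb, hWb⟩,
      hUW.mono (hUs.trans sdiff_subset) (hWs.trans sdiff_subset)⟩
    rw [he] at hmem
    obtain ⟨n, hn⟩ := hmem
    refine ⟨n, ?_⟩
    rintro (h | ⟨⟨q, z⟩, ⟨h1, h2, h3, h4⟩, hq'⟩ | ⟨⟨q, z⟩, ⟨h1, h2, h3, h4⟩, hq'⟩)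
    · apply h.2
      rw [hn]
      exact ⟨hxU', hyW'⟩
    · dsimp only at hq' h1 h2 h3 h4
      subst hq'
      rw [hn] at h4
      exact (hWs h4).2 ⟨h2, h3⟩
    · dsimp only at hq' h1 h2 h3 h4
      subst hq'
      rw [hn] at h4
      exact (hUs h4).2 ⟨h2, h3⟩
  obtain ⟨D, hD1, hD2, hD3⟩ := novSep_analytic A hA hAe
  let C : ℕ → Set (V × V) := fun n => E \ D n
  have hC : ∀ n, MeasurableSet (C n) := fun n => hE.diff (hD1 n)
  have hCA : ∀ n p, p ∈ C n → p ∉ A n := fun n p hp h => hp.2 (hD2 n h)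
  have hCmem : ∀ n x y, (x, y) ∈ C n → x ∈ (e n).1 ∧ y ∈ (e n).2 := by
    intro n x y h
    by_contra hcon
    exact hCA n _ h (Or.inl ⟨h.1, hcon⟩)
  have hCr : ∀ n x y z, (x, y) ∈ C n → (x, z) ∈ C n → y = z := by
    intro n x y z hy hz
    by_contra hcon
    exact hCA n _ hy (Or.inr (Or.inl ⟨((x, y), z),
      ⟨hy.1, hz.1, fun h => hcon h.symm, (hCmem n _ _ hz).2⟩, rfl⟩))
  have hCl : ∀ n x y z, (y, x) ∈ C n → (z, x) ∈ C n → y = z := by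
    intro n x y z hy hz
    by_contra hcon
    exact hCA n _ hy (Or.inr (Or.inr ⟨((y, x), z),
      ⟨hy.1, G.adj_symm hz.1, fun h => hcon h.symm, (hCmem n _ _ hz).1⟩, rfl⟩))
  refine ⟨fun n => C n ∪ Prod.swap ⁻¹' C n, fun n => (hC n).union (measurable_swap (hC n)),
    fun n => ⟨?_, ?_, ?_⟩, ?_⟩
  · rintro ⟨x, y⟩ (h | h)
    · exact h.1
    · exact G.adj_symm h.1
  · rintro ⟨x, y⟩ (h | h)
    · exact Or.inr h
    · exact Or.inl h
  · rintro x y z (h | h) (h' | h')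
    · exact hCr n x y z h h'
    · exact (Set.disjoint_left.1 (hd n) (hCmem n _ _ h).1 (hCmem n _ _ h').2).elim
    · exact (Set.disjoint_left.1 (hd n) (hCmem n _ _ h').1 (hCmem n _ _ h).2).elim
    · exact hCl n x y z h h'
  · intro x y hxy
    obtain ⟨n, hn⟩ := hD3 (x, y)
    exact ⟨n, Or.inl ⟨hxy, hn⟩⟩

lemma mat_step {V : Type*} [MeasurableSpace V] [StandardBorelSpace V]
    (G : SimpleGraph V) (M B : Set (V × V)) (hM : MeasurableSet M) (hB : MeasurableSet B)
    (hMm : IsMat G M) (hBm : IsMat G B) :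
    ∃ M', MeasurableSet M' ∧ IsMat G M' ∧ M ⊆ M' ∧
      ∀ x y, (x, y) ∈ B → (∃ z, (x, z) ∈ M') ∨ (∃ z, (y, z) ∈ M') := by
  let S : Set V := Prod.fst '' M
  have hS : MeasurableSet S := by
    refine hM.image_of_measurable_injOn measurable_fst ?_
    rintro ⟨x, y⟩ h ⟨x', z⟩ h' (rfl : x = x')
    rw [hMm.2.2 x y z h h']
  have hSm : ∀ x y, (x, y) ∈ M → x ∈ S := fun x y h => ⟨(x, y), h, rfl⟩
  refine ⟨M ∪ (B ∩ (Sᶜ ×ˢ Sᶜ)), hM.union (hB.inter (hS.compl.prod hS.compl)), ⟨?_, ?_, ?_⟩,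
    subset_union_left, ?_⟩
  · exact union_subset hMm.1 (inter_subset_left.trans hBm.1)
  · rintro p (h | h)
    · exact Or.inl (hMm.2.1 p h)
    · exact Or.inr ⟨hBm.2.1 p h.1, h.2.2, h.2.1⟩
  · rintro x y z (h | h) (h' | h')
    · exact hMm.2.2 x y z h h'
    · exact (h'.2.1 (hSm _ _ h)).elim
    · exact (h.2.1 (hSm _ _ h')).elim
    · exact hBm.2.2 x y z h.1 h'.1
  · intro x y h
    by_cases hx : x ∈ S
    · obtain ⟨⟨_, z⟩, hz, rfl⟩ := hx
      exact Or.inl ⟨z, Or.inl hz⟩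
    by_cases hy : y ∈ S
    · obtain ⟨⟨_, z⟩, hz, rfl⟩ := hy
      exact Or.inr ⟨z, Or.inl hz⟩
    exact Or.inl ⟨y, Or.inr ⟨h, hx, hy⟩⟩

/-- Every locally finite Borel graph has a maximal matching `M ⊆ E` which is a Borel
subset of `V²`. -/
theorem stmt_14 {V : Type*} [MeasurableSpace V] [StandardBorelSpace V]
    (G : SimpleGraph V) (hlf : ∀ x : V, (G.neighborSet x).Finite)
    (hE : MeasurableSet {p : V × V | G.Adj p.1 p.2}) :
    ∃ M : Set (V × V),
      MeasurableSet M ∧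
      M ⊆ {p : V × V | G.Adj p.1 p.2} ∧
      (∀ p ∈ M, (p.2, p.1) ∈ M) ∧
      (∀ x y z : V, (x, y) ∈ M → (x, z) ∈ M → y = z) ∧
      (∀ x y : V, G.Adj x y → (∃ z, (x, z) ∈ M) ∨ (∃ z, (y, z) ∈ M)) := by
  obtain ⟨B, hB1, hB2, hB3⟩ := exists_cover G hlf hE
  let T := {M : Set (V × V) // MeasurableSet M ∧ IsMat G M}
  have step : ∀ (n : ℕ) (M : T), ∃ M' : T, M.1 ⊆ M'.1 ∧
      ∀ x y, (x, y) ∈ B n → (∃ z, (x, z) ∈ M'.1) ∨ (∃ z, (y, z) ∈ M'.1) := by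
    rintro n ⟨M, h1, h2⟩
    obtain ⟨M', a, b, c, d⟩ := mat_step G M (B n) h1 (hB1 n) h2 (hB2 n)
    exact ⟨⟨M', a, b⟩, c, d⟩
  choose F hF1 hF2 using step
  let N : ℕ → T := fun n => Nat.rec
    ⟨∅, MeasurableSet.empty, empty_subset _, fun p hp => hp.elim, fun x y z h => h.elim⟩
    (fun n M => F n M) n
  have hN : ∀ n, N (n+1) = F n (N n) := fun n => rfl
  have hmono : Monotone fun n => (N n).1 :=
    monotone_nat_of_le_succ fun n => by rw [hN]; exact hF1 n _
  refine ⟨⋃ n, (N n).1, MeasurableSet.iUnion fun n => (N n).2.1,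
    iUnion_subset fun n => (N n).2.2.1, ?_, ?_, ?_⟩
  · intro p hp
    obtain ⟨n, hn⟩ := mem_iUnion.1 hp
    exact mem_iUnion.2 ⟨n, (N n).2.2.2.1 p hn⟩
  · intro x y z hy hz
    obtain ⟨n, hn⟩ := mem_iUnion.1 hy
    obtain ⟨k, hk⟩ := mem_iUnion.1 hz
    exact (N (max n k)).2.2.2.2 x y z (hmono (le_max_left n k) hn) (hmono (le_max_right n k) hk)
  · intro x y hxy
    obtain ⟨n, hn⟩ := hB3 x y hxy
    rcases hF2 n (N n) x y hn with ⟨z, hz⟩ | ⟨z, hz⟩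
    · exact Or.inl ⟨z, mem_iUnion.2 ⟨n+1, hz⟩⟩
    · exact Or.inr ⟨z, mem_iUnion.2 ⟨n+1, hz⟩⟩
end
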